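/- Suppose the pair of random parameters (Θ₁, Θ₂) is independent of (X, Y), Θ₁ and Θ₂ are independent and identically distributed, and the ensemble is class-wise calibrated, i.e. for every class k ∈ K the conditional expectation E[1{Y = k} | p_k(X)] = p_k(X) almost surely, where p_k(x) = ℙ[c(Θ₁, x) = k]. Then the expected agreement equals the expected accuracy: ℙ[c(Θ₁, X) = c(Θ₂, X)] = ℙ[c(Θ₁, X) = Y]. -/

import Mathlib

open MeasureTheory ProbabilityTheory

/-!
Fix a class `k`. Conditionally on `X`, both classifiers predict `k` with probability `p_k(X) ^ 2`,
since they are i.i.d., while a classifier is independent of the label, so that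
`ℙ[c(Θ₁, X) = k, Y = k] = 𝔼[p_k(X) 1{Y = k}]`. Calibration says that `p_k(X)` is the conditional
expectation of `1{Y = k}` given `p_k(X)` itself, and pulling out `p_k(X)` gives
`𝔼[p_k(X) ^ 2] = 𝔼[p_k(X) 1{Y = k}]`. Summing over `k` gives the result.
-/

section Measure

variable {Ω A B : Type*} [MeasurableSpace A] [MeasurableSpace B]

lemma measure_setOf_eq_eq_tsum [MeasurableSpace Ω] [MeasurableSingletonClass A] [Countable A]
    (μ : Measure Ω) {f g : Ω → A} (hf : Measurable f) (hg : Measurable g) :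
    μ {ω | f ω = g ω} = ∑' a, μ {ω | f ω = a ∧ g ω = a} := by
  have union_eq : {ω | f ω = g ω} = ⋃ a, {ω | f ω = a ∧ g ω = a} := by
    ext ω
    simp [eq_comm]
  rw [union_eq, measure_iUnion]
  · exact fun a b hab ↦ Set.disjoint_left.2 fun ω ha hb ↦ hab (ha.1.symm.trans hb.1)
  · exact fun a ↦ (hf (measurableSet_singleton a)).inter (hg (measurableSet_singleton a))

lemma measurable_measureReal_setOf_prodMk_mem [MeasurableSpace Ω] {μ : Measure Ω} [SFinite μ]
    {U : Ω → A} (hU : Measurable U) {S : Set (A × B)} (hS : MeasurableSet S) :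
    Measurable fun b ↦ μ.real {ω | (U ω, b) ∈ S} := by
  have map_eq (b : B) : μ {ω | (U ω, b) ∈ S} = μ.map U ((fun a ↦ (a, b)) ⁻¹' S) :=
    (Measure.map_apply hU (measurable_prodMk_right hS)).symm
  simp only [measureReal_def, map_eq]
  exact (measurable_measure_prodMk_right hS).ennreal_toReal

lemma measureReal_setOf_prodMk_mem_of_indepFun [MeasurableSpace Ω] {μ : Measure Ω}
    [IsFiniteMeasure μ] {U : Ω → A} {V : Ω → B} (hU : Measurable U) (hV : Measurable V)
    (hUV : IndepFun U V μ) {S : Set (A × B)} (hS : MeasurableSet S) :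
    μ.real {ω | (U ω, V ω) ∈ S} = ∫ ω, μ.real {ω' | (U ω', V ω) ∈ S} ∂μ := by
  have map_eq := (indepFun_iff_map_prod_eq_prod_map_map hU.aemeasurable hV.aemeasurable).1 hUV
  have lintegral_eq : μ {ω | (U ω, V ω) ∈ S} = ∫⁻ ω, μ {ω' | (U ω', V ω) ∈ S} ∂μ := calc
    μ {ω | (U ω, V ω) ∈ S} = (μ.map U).prod (μ.map V) S := by
      rw [← map_eq, Measure.map_apply (hU.prodMk hV) hS, Set.preimage]
    _ = ∫⁻ ω, μ.map U ((fun a ↦ (a, V ω)) ⁻¹' S) ∂μ := by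
      rw [Measure.prod_apply_symm hS, lintegral_map (measurable_measure_prodMk_right hS) hV]
    _ = ∫⁻ ω, μ {ω' | (U ω', V ω) ∈ S} ∂μ :=
      lintegral_congr fun ω ↦ Measure.map_apply hU (measurable_prodMk_right hS)
  have integrand_measurable :=
    (measurable_measureReal_setOf_prodMk_mem (μ := μ) hU hS).comp hV
  rw [measureReal_def, lintegral_eq, integral_eq_lintegral_of_nonneg_ae
    (ae_of_all _ fun _ ↦ measureReal_nonneg) integrand_measurable.aestronglyMeasurable]
  exact congrArg ENNReal.toReal (lintegral_congr fun _ ↦ (ofReal_measureReal ..).symm)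

lemma integral_mul_condExp {m m₀ : MeasurableSpace Ω} {μ : Measure Ω} (hm : m ≤ m₀)
    [SigmaFinite (μ.trim hm)] {f g : Ω → ℝ} (hg : AEStronglyMeasurable[m] g μ)
    (hgf : Integrable (g * f) μ) (hf : Integrable f μ) :
    ∫ ω, g ω * (μ[f | m]) ω ∂μ = ∫ ω, g ω * f ω ∂μ :=
  (integral_congr_ae (condExp_mul_of_aestronglyMeasurable_left hg hgf hf).symm).trans
    (integral_condExp hm)

end Measure

section Calibration

variable {Ω 𝒳 K : Type*} [MeasurableSpace Ω]

/-- Class-wise calibration of a score function `p`: for each class `k`, the conditional probability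
of `Y = k` given the score `p k X` is that score, almost surely. -/
def IsClasswiseCalibrated (μ : Measure Ω) (p : K → 𝒳 → ℝ) (X : Ω → 𝒳) (Y : Ω → K) : Prop :=
  ∀ k, μ⟦Y ⁻¹' {k} | MeasurableSpace.comap (fun ω ↦ p k (X ω)) inferInstance⟧
    =ᵐ[μ] fun ω ↦ p k (X ω)

lemma isClasswiseCalibrated_iff_ite [DecidableEq K] {μ : Measure Ω} {p : K → 𝒳 → ℝ} {X : Ω → 𝒳}
    {Y : Ω → K} :
    IsClasswiseCalibrated μ p X Y ↔ ∀ k, μ[fun ω ↦ if Y ω = k then (1 : ℝ) else 0 |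
      MeasurableSpace.comap (fun ω ↦ p k (X ω)) inferInstance] =ᵐ[μ] fun ω ↦ p k (X ω) := by
  have indicator_eq_ite (k : K) :
      ((Y ⁻¹' {k}).indicator fun _ ↦ (1 : ℝ)) = fun ω ↦ if Y ω = k then 1 else 0 := by
    ext ω
    simp [Set.indicator]
  simp only [IsClasswiseCalibrated, indicator_eq_ite]

lemma IsClasswiseCalibrated.integral_sq_eq_setIntegral {μ : Measure Ω} [IsFiniteMeasure μ]
    {p : K → 𝒳 → ℝ} {X : Ω → 𝒳} {Y : Ω → K} (hcal : IsClasswiseCalibrated μ p X Y) {k : K}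
    (hp : Measurable fun ω ↦ p k (X ω)) (hY : MeasurableSet (Y ⁻¹' {k})) :
    ∫ ω, p k (X ω) ^ 2 ∂μ = ∫ ω in Y ⁻¹' {k}, p k (X ω) ∂μ := by
  set q : Ω → ℝ := fun ω ↦ p k (X ω)
  set label : Ω → ℝ := (Y ⁻¹' {k}).indicator fun _ ↦ 1
  have q_integrable : Integrable q μ := integrable_condExp.congr (hcal k)
  have label_integrable : Integrable label μ := (integrable_const 1).indicator hY
  have mul_label : q * label = (Y ⁻¹' {k}).indicator q := by
    ext ω
    simp [label, ← Set.indicator_mul_right]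
  calc ∫ ω, q ω ^ 2 ∂μ
      = ∫ ω, q ω * (μ[label | MeasurableSpace.comap q inferInstance]) ω ∂μ := by
        refine integral_congr_ae ?_
        filter_upwards [hcal k] with ω hω
        rw [hω, sq]
    _ = ∫ ω, (q * label) ω ∂μ :=
        integral_mul_condExp hp.comap_le
          (comap_measurable q).stronglyMeasurable.aestronglyMeasurable
          (mul_label ▸ q_integrable.indicator hY) label_integrable
    _ = ∫ ω in Y ⁻¹' {k}, q ω ∂μ := by rw [mul_label, integral_indicator hY]

end Calibration

section Ensemble

variable {Ω 𝒳 Θ K : Type*} [MeasurableSpace Ω]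

/-- The ensemble probability `p_k(x)`: the probability that the classifier with random parameter `T`
assigns the class `k` to the point `x`. -/
noncomputable def ensembleProb (μ : Measure Ω) (c : Θ × 𝒳 → K) (T : Ω → Θ) (k : K) (x : 𝒳) : ℝ :=
  μ.real {ω | c (T ω, x) = k}

variable [MeasurableSpace 𝒳] [MeasurableSpace Θ] [MeasurableSpace K] [MeasurableSingletonClass K]
  {μ : Measure Ω} {X : Ω → 𝒳} {Y : Ω → K} {c : Θ × 𝒳 → K} {T T₁ T₂ : Ω → Θ}

lemma measurable_ensembleProb [SFinite μ] (hc : Measurable c) (hT : Measurable T) (k : K) :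
    Measurable (ensembleProb μ c T k) :=
  measurable_measureReal_setOf_prodMk_mem hT (hc (measurableSet_singleton k))

lemma ensembleProb_eq_of_identDistrib {Ω' : Type*} [MeasurableSpace Ω'] {ν : Measure Ω'}
    {T' : Ω' → Θ} (hc : Measurable c) (hT : IdentDistrib T T' μ ν) (k : K) (x : 𝒳) :
    ensembleProb μ c T k x = ensembleProb ν c T' k x :=
  congrArg ENNReal.toReal <| hT.measure_mem_eq <|
    (hc.comp measurable_prodMk_right) (measurableSet_singleton k)

lemma measureReal_predict_and_predict_eq_sq (hc : Measurable c) (hT : IndepFun T₁ T₂ μ)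
    (hId : IdentDistrib T₁ T₂ μ μ) (k : K) (x : 𝒳) :
    μ.real {ω | c (T₁ ω, x) = k ∧ c (T₂ ω, x) = k} = ensembleProb μ c T₁ k x ^ 2 := by
  have predict_measurable : MeasurableSet {t | c (t, x) = k} :=
    (hc.comp measurable_prodMk_right) (measurableSet_singleton k)
  calc μ.real {ω | c (T₁ ω, x) = k ∧ c (T₂ ω, x) = k}
      = ensembleProb μ c T₁ k x * ensembleProb μ c T₂ k x :=
        (congrArg ENNReal.toReal (hT.measure_inter_preimage_eq_mul _ _ predict_measurable
          predict_measurable)).trans ENNReal.toReal_mul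
    _ = ensembleProb μ c T₁ k x ^ 2 := by
        rw [← ensembleProb_eq_of_identDistrib hc hId, sq]

lemma measureReal_predict_and_predict_eq_integral_sq [IsFiniteMeasure μ] (hX : Measurable X)
    (hc : Measurable c) (hT₁ : Measurable T₁) (hT₂ : Measurable T₂)
    (hTX : IndepFun (fun ω ↦ (T₁ ω, T₂ ω)) X μ) (hT : IndepFun T₁ T₂ μ)
    (hId : IdentDistrib T₁ T₂ μ μ) (k : K) :
    μ.real {ω | c (T₁ ω, X ω) = k ∧ c (T₂ ω, X ω) = k}
      = ∫ ω, ensembleProb μ c T₁ k (X ω) ^ 2 ∂μ := by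
  have predict₁_measurable : Measurable fun z : (Θ × Θ) × 𝒳 ↦ c (z.1.1, z.2) := by fun_prop
  have predict₂_measurable : Measurable fun z : (Θ × Θ) × 𝒳 ↦ c (z.1.2, z.2) := by fun_prop
  simp only [← measureReal_predict_and_predict_eq_sq hc hT hId]
  exact measureReal_setOf_prodMk_mem_of_indepFun (hT₁.prodMk hT₂) hX hTX
    ((predict₁_measurable (measurableSet_singleton k)).inter
      (predict₂_measurable (measurableSet_singleton k)))

lemma measureReal_predict_and_label_eq_setIntegral [IsFiniteMeasure μ] (hX : Measurable X)
    (hY : Measurable Y) (hc : Measurable c) (hT : Measurable T)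
    (hTXY : IndepFun T (fun ω ↦ (X ω, Y ω)) μ) (k : K) :
    μ.real {ω | c (T ω, X ω) = k ∧ Y ω = k}
      = ∫ ω in Y ⁻¹' {k}, ensembleProb μ c T k (X ω) ∂μ := by
  have predict_measurable : Measurable fun z : Θ × 𝒳 × K ↦ c (z.1, z.2.1) := by fun_prop
  have label_measurable : Measurable fun z : Θ × 𝒳 × K ↦ z.2.2 := by fun_prop
  rw [← integral_indicator (hY (measurableSet_singleton k))]
  refine (measureReal_setOf_prodMk_mem_of_indepFun hT (hX.prodMk hY) hTXY
    ((predict_measurable (measurableSet_singleton k)).inter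
      (label_measurable (measurableSet_singleton k)))).trans
    (integral_congr_ae (ae_of_all _ fun ω ↦ ?_))
  by_cases hk : Y ω = k <;> simp [hk, ensembleProb]

theorem expected_agreement_eq_expected_accuracy_general [Countable K] [IsProbabilityMeasure μ]
    (hX : Measurable X) (hY : Measurable Y) (hc : Measurable c)
    (hT₁ : Measurable T₁) (hT₂ : Measurable T₂)
    (hTX : IndepFun (fun ω ↦ (T₁ ω, T₂ ω)) X μ) (hTXY : IndepFun T₁ (fun ω ↦ (X ω, Y ω)) μ)
    (hT : IndepFun T₁ T₂ μ) (hId : IdentDistrib T₁ T₂ μ μ)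
    (hcal : IsClasswiseCalibrated μ (ensembleProb μ c T₁) X Y) :
    μ {ω | c (T₁ ω, X ω) = c (T₂ ω, X ω)} = μ {ω | c (T₁ ω, X ω) = Y ω} := by
  have predict₁_measurable : Measurable fun ω ↦ c (T₁ ω, X ω) := by fun_prop
  have predict₂_measurable : Measurable fun ω ↦ c (T₂ ω, X ω) := by fun_prop
  rw [measure_setOf_eq_eq_tsum μ predict₁_measurable predict₂_measurable,
    measure_setOf_eq_eq_tsum μ predict₁_measurable hY]
  refine tsum_congr fun k ↦ (measureReal_eq_measureReal_iff ..).1 ?_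
  calc μ.real {ω | c (T₁ ω, X ω) = k ∧ c (T₂ ω, X ω) = k}
      = ∫ ω, ensembleProb μ c T₁ k (X ω) ^ 2 ∂μ :=
        measureReal_predict_and_predict_eq_integral_sq hX hc hT₁ hT₂ hTX hT hId k
    _ = ∫ ω in Y ⁻¹' {k}, ensembleProb μ c T₁ k (X ω) ∂μ :=
        hcal.integral_sq_eq_setIntegral ((measurable_ensembleProb hc hT₁ k).comp hX)
          (hY (measurableSet_singleton k))
    _ = μ.real {ω | c (T₁ ω, X ω) = k ∧ Y ω = k} :=
        (measureReal_predict_and_label_eq_setIntegral hX hY hc hT₁ hTXY k).symm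

end Ensemble

/-- If the pair of random parameters `(Θ₁, Θ₂)` is independent of `(X, Y)`, `Θ₁` and `Θ₂`
are i.i.d., and the ensemble is class-wise calibrated, then the expected agreement equals
the expected accuracy. -/
theorem expected_agreement_eq_expected_accuracy
    {Ω 𝒳 Θ K : Type*} [MeasurableSpace Ω] [MeasurableSpace 𝒳] [MeasurableSpace Θ]
    [MeasurableSpace K] [MeasurableSingletonClass K] [Fintype K] [Nonempty K] [DecidableEq K]
    (μ : Measure Ω) [IsProbabilityMeasure μ]
    (X : Ω → 𝒳) (Y : Ω → K) (c : Θ × 𝒳 → K) (T₁ T₂ : Ω → Θ)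
    (hX : Measurable X) (hY : Measurable Y) (hc : Measurable c)
    (hT₁ : Measurable T₁) (hT₂ : Measurable T₂)
    (p : K → 𝒳 → ℝ)
    (hp : ∀ k x, p k x = (μ {ω | c (T₁ ω, x) = k}).toReal)
    -- (Θ₁, Θ₂) is independent of (X, Y)
    (hIndep : IndepFun (fun ω => (T₁ ω, T₂ ω)) (fun ω => (X ω, Y ω)) μ)
    -- Θ₁ and Θ₂ are independent
    (hTT : IndepFun T₁ T₂ μ)
    -- Θ₁ and Θ₂ are identically distributed
    (hId : IdentDistrib T₁ T₂ μ μ)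
    -- class-wise calibration: E[1{Y = k} | p_k(X)] = p_k(X) a.s. for every class k
    (hCal : ∀ k : K,
      μ[(fun ω => if Y ω = k then (1 : ℝ) else 0) |
        MeasurableSpace.comap (fun ω => p k (X ω)) inferInstance]
        =ᵐ[μ] fun ω => p k (X ω)) :
    μ {ω | c (T₁ ω, X ω) = c (T₂ ω, X ω)} = μ {ω | c (T₁ ω, X ω) = Y ω} := by
  obtain rfl : p = ensembleProb μ c T₁ := funext₂ hp
  exact expected_agreement_eq_expected_accuracy_general hX hY hc hT₁ hT₂
    (hIndep.comp measurable_id measurable_fst) (hIndep.comp measurable_fst measurable_id) hTT hId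
    (isClasswiseCalibrated_iff_ite.2 hCal)
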